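/- Let T : ℝ/ℤ → ℝ/ℤ be a C^r expanding map, r ∈ {1,2,...,∞,ω}, of degree D = deg(T). If log|T'| is C⁰-cohomologous to a constant (i.e. there is continuous u with log|T'| = u∘T − u + c), then T is C^r-conjugate to the linear map x ↦ D·x mod 1; specifically there is a C^r diffeomorphism φ of ℝ/ℤ with φ∘T∘φ^{-1}(x) = D·x and c = log D. -/

import Mathlib

/-!
Put `ψ = κ e^{-u}`, with `κ` chosen so that `ψ` has integral one over a period. The cohomological
equation says that `(ψ ∘ T) · T' = a ψ` with `|a| = e^c`, so a primitive `φ` of `ψ` satisfies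
`φ ∘ T = a φ + b`. Comparing the values at `x` and `x + 1` gives `a = D`, and a translation
removes `b`.

For the regularity of `φ`, replace `T` by its inverse `S`, which `φ` conjugates to multiplication
by `a = D⁻¹`. Then `log φ' = log φ' ∘ S + log (a⁻¹ S')`, and in the coordinate `t = φ x` this
reads `v t = v (a t) + G t`. Differentiating such an equation introduces a contracting factor
`a`, so the series for the derivatives of `v` converge and `v` is as smooth as `G`; since `G`
is built from `S'` and `φ⁻¹`, finite smoothness follows by bootstrapping. In the analytic case
the logarithm of the difference quotient of `φ` at the fixed point `p` of `S` solves
`v = v ∘ S + g` with `g` analytic; the series `∑ g ∘ Sⁿ` converges on a complex ball around `p`,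
and the conjugacy carries analyticity from `p` to the whole line.
-/

open Filter Topology Set Metric
open scoped ContDiff

section LocalDynamics

variable {X : Type*} [PseudoMetricSpace X] {F : X → X} {p : X} {ρ : ℝ}

theorem eventually_forall_dist_iterate_le (hρ0 : 0 ≤ ρ) (hρ1 : ρ ≤ 1)
    (hF : ∀ᶠ z in 𝓝 p, dist (F z) p ≤ ρ * dist z p) :
    ∀ᶠ z in 𝓝 p, ∀ n : ℕ, dist (F^[n] z) p ≤ ρ ^ n * dist z p := by
  obtain ⟨ε, hε, hball⟩ := eventually_nhds_iff_ball.1 hF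
  filter_upwards [ball_mem_nhds p hε] with z hz n
  induction n with
  | zero => simp
  | succ n ih =>
    have h_mem : F^[n] z ∈ ball p ε :=
      (ih.trans (mul_le_of_le_one_left dist_nonneg (pow_le_one₀ hρ0 hρ1))).trans_lt hz
    calc dist (F^[n + 1] z) p
        ≤ ρ * dist (F^[n] z) p := by
          rw [Function.iterate_succ_apply']; exact hball _ h_mem
      _ ≤ ρ * (ρ ^ n * dist z p) := by gcongr
      _ = ρ ^ (n + 1) * dist z p := by ring

theorem eventually_forall_iterate {P : X → Prop} (hρ0 : 0 ≤ ρ) (hρ1 : ρ ≤ 1)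
    (hF : ∀ᶠ z in 𝓝 p, dist (F z) p ≤ ρ * dist z p) (hP : ∀ᶠ z in 𝓝 p, P z) :
    ∀ᶠ z in 𝓝 p, ∀ n : ℕ, P (F^[n] z) := by
  obtain ⟨ε, hε, hball⟩ := eventually_nhds_iff_ball.1 hP
  filter_upwards [ball_mem_nhds p hε, eventually_forall_dist_iterate_le hρ0 hρ1 hF]
    with z hz hdist n
  exact hball _ ((hdist n).trans_lt
    ((mul_le_of_le_one_left dist_nonneg (pow_le_one₀ hρ0 hρ1)).trans_lt hz))

theorem eventually_tendsto_iterate (hρ0 : 0 ≤ ρ) (hρ1 : ρ < 1)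
    (hF : ∀ᶠ z in 𝓝 p, dist (F z) p ≤ ρ * dist z p) :
    ∀ᶠ z in 𝓝 p, Tendsto (fun n : ℕ => F^[n] z) atTop (𝓝 p) := by
  filter_upwards [eventually_forall_dist_iterate_le hρ0 hρ1.le hF] with z hz
  refine tendsto_iff_dist_tendsto_zero.2
    (squeeze_zero (fun _ => dist_nonneg) hz ?_)
  simpa using (tendsto_pow_atTop_nhds_zero_of_lt_one hρ0 hρ1).mul_const (dist z p)

theorem eventually_dist_le_of_hasDerivAt {𝕜 : Type*} [NontriviallyNormedField 𝕜] {F : 𝕜 → 𝕜}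
    {p a : 𝕜} (hF : HasDerivAt F a p) (hp : F p = p) (ha : ‖a‖ < ρ) :
    ∀ᶠ z in 𝓝 p, dist (F z) p ≤ ρ * dist z p := by
  filter_upwards [hF.isLittleO.def (sub_pos.2 ha)] with z hz
  rw [hp] at hz
  calc dist (F z) p = ‖(F z - p - (z - p) • a) + (z - p) • a‖ := by
        rw [dist_eq_norm, sub_add_cancel]
    _ ≤ (ρ - ‖a‖) * ‖z - p‖ + ‖z - p‖ * ‖a‖ :=
        (norm_add_le _ _).trans (add_le_add hz (norm_smul_le _ _))
    _ = ρ * dist z p := by rw [dist_eq_norm]; ring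

end LocalDynamics

theorem sum_range_pow_smul_comp_iterate {R M X : Type*} [Semiring R] [AddCommGroup M] [Module R M]
    {S : X → X} {v g : X → M} {m : R} {x : X}
    (h : ∀ n, v (S^[n] x) = m • v (S^[n + 1] x) + g (S^[n] x)) (n : ℕ) :
    ∑ i ∈ Finset.range n, m ^ i • g (S^[i] x) = v x - m ^ n • v (S^[n] x) := by
  induction n with
  | zero => simp
  | succ n ih =>
    rw [Finset.sum_range_succ, ih, h n, smul_add, smul_smul, ← pow_succ]
    abel

theorem exists_analyticAt_eq_ofReal {f : ℝ → ℝ} {p : ℝ} (hf : AnalyticAt ℝ f p) :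
    ∃ F : ℂ → ℂ, AnalyticAt ℂ F p ∧ ∀ᶠ x : ℝ in 𝓝 p, F x = f x := by
  obtain ⟨q, hq⟩ := hf
  let Q := FormalMultilinearSeries.ofScalars ℂ fun n => (q.coeff n : ℂ)
  have h_norm (n : ℕ) : ‖Q n‖ = ‖q n‖ := by
    simp [Q, FormalMultilinearSeries.norm_apply_eq_norm_coef]
  have h_radius : Q.radius = q.radius := by
    simp only [FormalMultilinearSeries.radius, h_norm]
  have hQ : HasFPowerSeriesOnBall Q.sum Q 0 Q.radius :=
    Q.hasFPowerSeriesOnBall (h_radius ▸ hq.radius_pos)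
  refine ⟨fun z => Q.sum (z - p), ?_, ?_⟩
  · have h0 : AnalyticAt ℂ Q.sum (p - p) := by simpa using hQ.analyticAt
    exact h0.comp (f := fun z : ℂ => z - p) (by fun_prop)
  · filter_upwards [hq.eventually_hasSum_sub] with x hx
    have h_cast := Complex.hasSum_ofReal.2 hx
    simpa [FormalMultilinearSeries.sum, Q, FormalMultilinearSeries.apply_eq_pow_smul_coeff,
      mul_comm] using h_cast.tsum_eq

theorem deriv_eq_ofReal_deriv {F : ℂ → ℂ} {f : ℝ → ℝ} {p : ℝ} (hF : DifferentiableAt ℂ F p)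
    (hf : DifferentiableAt ℝ f p) (h : ∀ᶠ x : ℝ in 𝓝 p, F x = f x) :
    deriv F p = deriv f p :=
  hF.hasDerivAt.comp_ofReal.unique (hf.hasDerivAt.ofReal_comp.congr_of_eventuallyEq h)

theorem differentiableAt_iterate {𝕜 E : Type*} [NontriviallyNormedField 𝕜]
    [NormedAddCommGroup E] [NormedSpace 𝕜 E] {F : E → E} {z : E}
    (h : ∀ k : ℕ, DifferentiableAt 𝕜 F (F^[k] z)) (n : ℕ) : DifferentiableAt 𝕜 F^[n] z := by
  induction n with
  | zero => exact differentiableAt_id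
  | succ n ih =>
    rw [Function.iterate_succ']
    exact (h n).comp z ih

theorem exists_analyticAt_hasSum_comp_iterate {F g : ℂ → ℂ} {p : ℂ} (hF : AnalyticAt ℂ F p)
    (hp : F p = p) (hF' : ‖deriv F p‖ < 1) (hg : AnalyticAt ℂ g p) (hgp : g p = 0) :
    ∃ Φ : ℂ → ℂ, AnalyticAt ℂ Φ p ∧ ∀ᶠ z in 𝓝 p, HasSum (fun n => g (F^[n] z)) (Φ z) := by
  obtain ⟨ρ, hρ, hρ1⟩ := exists_between hF'
  have hρ0 : 0 ≤ ρ := (norm_nonneg _).trans hρ.le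
  have h_contr := eventually_dist_le_of_hasDerivAt hF.differentiableAt.hasDerivAt hp hρ
  obtain ⟨C, hC0, hC⟩ := hg.differentiableAt.isBigO_sub.exists_nonneg
  have h_orbit := eventually_forall_iterate hρ0 hρ1.le h_contr
    (hF.eventually_analyticAt.and (hg.eventually_analyticAt.and hC.bound))
  obtain ⟨ε, hε, hball⟩ := eventually_nhds_iff_ball.1
    (h_orbit.and (eventually_forall_dist_iterate_le hρ0 hρ1.le h_contr))
  have h_diff (n : ℕ) : DifferentiableOn ℂ (fun z => g (F^[n] z)) (ball p ε) := fun z hz =>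
    (((hball z hz).1 n).2.1.differentiableAt.comp z (differentiableAt_iterate
      (fun k => ((hball z hz).1 k).1.differentiableAt) n)).differentiableWithinAt
  have h_bound (n : ℕ) (z : ℂ) (hz : z ∈ ball p ε) : ‖g (F^[n] z)‖ ≤ C * ε * ρ ^ n :=
    calc ‖g (F^[n] z)‖ ≤ C * dist (F^[n] z) p := by
          simpa [hgp, dist_eq_norm] using ((hball z hz).1 n).2.2
      _ ≤ C * (ρ ^ n * ε) := by
          gcongr
          exact ((hball z hz).2 n).trans (by gcongr; exact (mem_ball.1 hz).le)
      _ = C * ε * ρ ^ n := by ring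
  have h_summable : Summable fun n : ℕ => C * ε * ρ ^ n :=
    (summable_geometric_of_lt_one hρ0 hρ1).mul_left _
  refine ⟨fun z => ∑' n, g (F^[n] z), ?_, ?_⟩
  · exact (Complex.differentiableOn_tsum_of_summable_norm h_summable h_diff isOpen_ball
      h_bound).analyticAt (ball_mem_nhds p hε)
  · filter_upwards [ball_mem_nhds p hε] with z hz
    exact (Summable.of_norm_bounded h_summable fun n => h_bound n z hz).hasSum

theorem analyticAt_of_eventually_eq_comp_add {S g v : ℝ → ℝ} {p : ℝ} (hS : AnalyticAt ℝ S p)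
    (hp : S p = p) (hS' : |deriv S p| < 1) (hg : AnalyticAt ℝ g p) (hv : ContinuousAt v p)
    (h : ∀ᶠ x in 𝓝 p, v x = v (S x) + g x) : AnalyticAt ℝ v p := by
  have hgp : g p = 0 := by simpa [hp] using h.self_of_nhds
  obtain ⟨F, hF, hFS⟩ := exists_analyticAt_eq_ofReal hS
  obtain ⟨G, hG, hGg⟩ := exists_analyticAt_eq_ofReal hg
  have hF' : deriv F p = deriv S p :=
    deriv_eq_ofReal_deriv hF.differentiableAt hS.differentiableAt hFS
  obtain ⟨Φ, hΦ, h_sum⟩ := exists_analyticAt_hasSum_comp_iterate hF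
    (by rw [hFS.self_of_nhds, hp]) (by simpa [hF'] using hS') hG (by simp [hGg.self_of_nhds, hgp])
  obtain ⟨ρ, hρ, hρ1⟩ := exists_between hS'
  have hρ0 : 0 ≤ ρ := (abs_nonneg _).trans hρ.le
  have h_contr := eventually_dist_le_of_hasDerivAt hS.differentiableAt.hasDerivAt hp hρ
  refine (hΦ.re_ofReal.add (analyticAt_const (v := v p))).congr ?_
  filter_upwards [eventually_forall_iterate hρ0 hρ1.le h_contr (hFS.and (hGg.and h)),
    eventually_tendsto_iterate hρ0 hρ1 h_contr,
    Complex.continuous_ofReal.continuousAt.eventually h_sum] with x h_orbit h_tendsto hx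
  have h_iterate (n : ℕ) : F^[n] x = (S^[n] x : ℝ) := by
    induction n with
    | zero => rfl
    | succ n ih => rw [Function.iterate_succ_apply', Function.iterate_succ_apply', ih,
        (h_orbit n).1]
  have hx' : HasSum (fun n => g (S^[n] x)) (Φ x).re := by
    simpa [h_iterate, fun n => (h_orbit n).2.1] using Complex.hasSum_re hx
  have h_partial (n : ℕ) : ∑ i ∈ Finset.range n, g (S^[i] x) = v x - v (S^[n] x) := by
    simpa using sum_range_pow_smul_comp_iterate (m := (1 : ℕ)) (fun n => by
      simpa [Function.iterate_succ_apply'] using (h_orbit n).2.2) n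
  have h_limit : Tendsto (fun n => v x - v (S^[n] x)) atTop (𝓝 (v x - v p)) :=
    (hv.tendsto.comp h_tendsto).const_sub _
  have h_eq : (Φ x).re = v x - v p :=
    tendsto_nhds_unique hx'.tendsto_sum_nat (h_limit.congr fun n => (h_partial n).symm)
  simp [h_eq]

theorem analyticAt_dslope {𝕜 E : Type*} [NontriviallyNormedField 𝕜] [NormedAddCommGroup E]
    [NormedSpace 𝕜 E] {f : 𝕜 → E} {p : 𝕜} (hf : AnalyticAt 𝕜 f p) :
    AnalyticAt 𝕜 (dslope f p) p :=
  let ⟨_, hq⟩ := hf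
  ⟨_, hq.has_fpower_series_dslope_fslope⟩

theorem dslope_comp_mul_dslope {𝕜 : Type*} [NontriviallyNormedField 𝕜] {S φ : 𝕜 → 𝕜} {p a x : 𝕜}
    (hp : S p = p) (hS : deriv S p = a) (hφ : φ p = 0) (h : φ (S x) = a * φ x) :
    dslope φ p (S x) * dslope S p x = a * dslope φ p x := by
  rcases eq_or_ne x p with rfl | hx
  · rw [hp, dslope_same, dslope_same, hS, mul_comm]
  · have hSx : (x - p) * dslope S p x = S x - p := by
      simpa only [smul_eq_mul, hp] using sub_smul_dslope S p x
    refine mul_left_cancel₀ (sub_ne_zero.2 hx) ?_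
    calc (x - p) * (dslope φ p (S x) * dslope S p x)
        = (S x - p) * dslope φ p (S x) := by rw [← hSx]; ring
      _ = φ (S x) := sub_smul_dslope_of_zero hφ (S x)
      _ = a * ((x - p) * dslope φ p x) := by
          rw [h]; exact congrArg (a * ·) (sub_smul_dslope_of_zero hφ x).symm
      _ = (x - p) * (a * dslope φ p x) := by ring

theorem analyticAt_of_eventually_semiconj {S φ : ℝ → ℝ} {p : ℝ} (hS : AnalyticAt ℝ S p)
    (hp : S p = p) (hS0 : deriv S p ≠ 0) (hS1 : |deriv S p| < 1) (hφ : DifferentiableAt ℝ φ p)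
    (hφ' : deriv φ p ≠ 0) (h : ∀ᶠ x in 𝓝 p, φ (S x) = deriv S p * φ x) : AnalyticAt ℝ φ p := by
  have hφp : φ p = 0 := by
    have h_eq := h.self_of_nhds
    rw [hp] at h_eq
    exact (mul_left_eq_self₀.1 h_eq.symm).resolve_left fun h1 => by simp [h1] at hS1
  let χ (x : ℝ) : ℝ := (deriv φ p)⁻¹ * dslope φ p x
  let σ (x : ℝ) : ℝ := (deriv S p)⁻¹ * dslope S p x
  have hχp : χ p = 1 := by simp [χ, hφ']
  have hσp : σ p = 1 := by simp [σ, hS0]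
  have hχ : ContinuousAt χ p := continuousAt_const.mul (continuousAt_dslope_same.2 hφ)
  have hσ : AnalyticAt ℝ σ p := analyticAt_const.mul (analyticAt_dslope hS)
  have hχ_pos : ∀ᶠ x in 𝓝 p, 0 < χ x := hχ.eventually_const_lt (by simp [hχp])
  have hσ_pos : ∀ᶠ x in 𝓝 p, 0 < σ x := hσ.continuousAt.eventually_const_lt (by simp [hσp])
  have hS_tendsto : Tendsto S (𝓝 p) (𝓝 p) := by
    simpa only [hp] using hS.continuousAt.tendsto
  have h_log : AnalyticAt ℝ (fun x => Real.log (χ x)) p := by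
    refine analyticAt_of_eventually_eq_comp_add hS hp hS1 (hσ.log (by simp [hσp]))
      (hχ.log (by simp [hχp])) ?_
    filter_upwards [h, hσ_pos, hS_tendsto.eventually hχ_pos] with x hx hσx hχx
    rw [← Real.log_mul hχx.ne' hσx.ne']
    congr 1
    have h_eq := dslope_comp_mul_dslope hp rfl hφp hx
    simp only [χ, σ]
    field_simp
    linarith
  have h_exp : AnalyticAt ℝ (fun x => (x - p) * (deriv φ p * Real.exp (Real.log (χ x)))) p :=
    (analyticAt_id.sub analyticAt_const).mul (analyticAt_const.mul h_log.rexp)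
  refine h_exp.congr ?_
  filter_upwards [hχ_pos] with x hx
  rw [Real.exp_log hx]
  simp only [χ, mul_inv_cancel_left₀ hφ']
  exact sub_smul_dslope_of_zero hφp x

section Scaling

variable {E : Type*} [NormedAddCommGroup E] [NormedSpace ℝ E] {f G v : ℝ → E} {q l m : ℝ}

theorem exists_summable_bound_pow_smul_comp_pow_mul (hf : Continuous f) (hq : |q| < 1)
    (hl : |l| ≤ 1) (R : ℝ) :
    ∃ b : ℕ → ℝ, Summable b ∧ ∀ n, ∀ t ∈ ball 0 R, ‖q ^ n • f (l ^ n * t)‖ ≤ b n := by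
  obtain ⟨C, hC⟩ := (isCompact_closedBall (0 : ℝ) R).exists_bound_of_continuousOn hf.continuousOn
  refine ⟨fun n => |q| ^ n * C, (summable_geometric_of_lt_one (abs_nonneg q) hq).mul_right C,
    fun n t ht => ?_⟩
  have h_mem : l ^ n * t ∈ closedBall (0 : ℝ) R := by
    rw [mem_ball_zero_iff] at ht
    rw [mem_closedBall_zero_iff, norm_mul, norm_pow]
    exact (mul_le_of_le_one_left (norm_nonneg t) (pow_le_one₀ (norm_nonneg l) hl)).trans ht.le
  rw [norm_smul, norm_pow, Real.norm_eq_abs]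
  exact mul_le_mul_of_nonneg_left (hC _ h_mem) (by positivity)

theorem tendsto_sum_pow_smul_of_eq_smul_comp_mul_add (hl : |l| < 1) (hm : |m| ≤ 1)
    (hv : ContinuousAt v 0) (h : ∀ t, v t = m • v (l * t) + G t) (t : ℝ) :
    Tendsto (fun n => ∑ i ∈ Finset.range n, m ^ i • (G (l ^ i * t) - G 0)) atTop
      (𝓝 (v t - v 0)) := by
  have h_sum (n : ℕ) : ∑ i ∈ Finset.range n, m ^ i • (G (l ^ i * t) - G 0) =
      v t - v 0 - m ^ n • (v (l ^ n * t) - v 0) := by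
    have h_shift (n : ℕ) : v ((l * ·)^[n] t) - v 0 =
        m • (v ((l * ·)^[n + 1] t) - v 0) + (G ((l * ·)^[n] t) - G 0) := by
      have hG0 : G 0 = v 0 - m • v 0 := by
        have h0 := h 0
        rw [mul_zero] at h0
        exact eq_sub_of_add_eq' h0.symm
      rw [Function.iterate_succ_apply', h ((l * ·)^[n] t), hG0, smul_sub]
      abel
    simpa using sum_range_pow_smul_comp_iterate (v := (v · - v 0)) (g := (G · - G 0)) h_shift n
  have h_zero : Tendsto (fun n : ℕ => v (l ^ n * t) - v 0) atTop (𝓝 0) := by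
    have h_pow : Tendsto (fun n : ℕ => l ^ n * t) atTop (𝓝 0) := by
      simpa using (tendsto_pow_atTop_nhds_zero_of_abs_lt_one hl).mul_const t
    simpa using (hv.tendsto.comp h_pow).sub_const (v 0)
  have h_rem : Tendsto (fun n : ℕ => m ^ n • (v (l ^ n * t) - v 0)) atTop (𝓝 0) := by
    refine squeeze_zero_norm (fun n => ?_) (by simpa using h_zero.norm)
    rw [norm_smul, norm_pow]
    exact mul_le_of_le_one_left (norm_nonneg _) (pow_le_one₀ (norm_nonneg m) hm)
  simpa [h_sum] using h_rem.const_sub (v t - v 0)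

variable [CompleteSpace E]

theorem continuous_tsum_pow_smul_comp_pow_mul (hf : Continuous f) (hq : |q| < 1) (hl : |l| ≤ 1) :
    Continuous fun t => ∑' n : ℕ, q ^ n • f (l ^ n * t) := by
  refine continuous_iff_continuousAt.2 fun t => ?_
  obtain ⟨b, hb, h_bound⟩ := exists_summable_bound_pow_smul_comp_pow_mul hf hq hl (|t| + 1)
  exact (continuousOn_tsum (fun n => by fun_prop) hb h_bound).continuousAt
    (isOpen_ball.mem_nhds (by simp))

theorem hasDerivAt_of_eq_smul_comp_mul_add (hl : |l| < 1) (hm : |m| ≤ 1) (hG : ContDiff ℝ 1 G)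
    (hv : ContinuousAt v 0) (h : ∀ t, v t = m • v (l * t) + G t) (t : ℝ) :
    HasDerivAt v (∑' n : ℕ, (m * l) ^ n • deriv G (l ^ n * t)) t := by
  have hml : |m * l| < 1 := by
    rw [abs_mul]; exact (mul_le_of_le_one_left (abs_nonneg l) hm).trans_lt hl
  let f (n : ℕ) (t : ℝ) : E := m ^ n • (G (l ^ n * t) - G 0)
  have hf (n : ℕ) (t : ℝ) : HasDerivAt (f n) ((m * l) ^ n • deriv G (l ^ n * t)) t := by
    have hGd := (hG.differentiable one_ne_zero (l ^ n * t)).hasDerivAt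
    refine (((hGd.scomp t ((hasDerivAt_id t).const_mul (l ^ n))).sub_const (G 0)).const_smul
      (m ^ n)).congr_deriv ?_
    rw [mul_one, smul_smul, mul_pow]
  obtain ⟨b, hb, h_bound⟩ := exists_summable_bound_pow_smul_comp_pow_mul
    (hG.continuous_deriv le_rfl) hml hl.le (|t| + 1)
  have h0 : (0 : ℝ) ∈ ball 0 (|t| + 1) := mem_ball_self (by positivity)
  have h_summable0 : Summable (f · 0) := by simp [f, summable_zero]
  have h_tsum : ∀ s ∈ ball 0 (|t| + 1), v s = v 0 + ∑' n, f n s := by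
    intro s hs
    have h_sum := (summable_of_summable_hasDerivAt_of_isPreconnected hb isOpen_ball
      (convex_ball 0 _).isPreconnected (fun n s _ => hf n s) h_bound h0 h_summable0 hs).hasSum
    rw [tendsto_nhds_unique h_sum.tendsto_sum_nat
      (tendsto_sum_pow_smul_of_eq_smul_comp_mul_add hl hm hv h s), add_sub_cancel]
  have ht : t ∈ ball 0 (|t| + 1) := by simp
  refine ((hasDerivAt_tsum_of_isPreconnected hb isOpen_ball (convex_ball 0 _).isPreconnected
    (fun n s _ => hf n s) h_bound h0 h_summable0 ht).const_add (v 0)).congr_of_eventuallyEq ?_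
  exact eventually_of_mem (isOpen_ball.mem_nhds ht) h_tsum

theorem contDiff_of_eq_smul_comp_mul_add {k : ℕ} (hl : |l| < 1) (hm : |m| ≤ 1)
    (hG : ContDiff ℝ k G) (hv : Continuous v) (h : ∀ t, v t = m • v (l * t) + G t) :
    ContDiff ℝ k v := by
  induction k generalizing m G v with
  | zero => simpa using hv
  | succ k ih =>
    have hml : |m * l| < 1 := by
      rw [abs_mul]; exact (mul_le_of_le_one_left (abs_nonneg l) hm).trans_lt hl
    have hG1 : ContDiff ℝ 1 G := hG.of_le (by simp)
    have hvd := hasDerivAt_of_eq_smul_comp_mul_add hl hm hG1 hv.continuousAt h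
    have hv' : Continuous (deriv v) := by
      simpa only [funext fun t => (hvd t).deriv] using
        continuous_tsum_pow_smul_comp_pow_mul (hG1.continuous_deriv le_rfl) hml hl.le
    have hd : Differentiable ℝ v := fun t => (hvd t).differentiableAt
    have h' (t : ℝ) : deriv v t = (m * l) • deriv v (l * t) + deriv G t := by
      have h_right := (((hd (l * t)).hasDerivAt.scomp t ((hasDerivAt_id t).const_mul l)).const_smul
        m).add (hG1.differentiable one_ne_zero t).hasDerivAt
      have h_eq := (hd t).hasDerivAt.unique
        (h_right.congr_of_eventuallyEq (Eventually.of_forall h))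
      simpa [smul_smul] using h_eq
    push_cast at hG ⊢
    rw [contDiff_succ_iff_deriv] at hG ⊢
    exact ⟨hd, by simp, ih hml.le hG.2.2 hv' h'⟩

end Scaling

/-- `φ` is an orientation-preserving `C¹` diffeomorphism of the line conjugating `S` to
multiplication by `a`. -/
structure IsLinearization (φ : ℝ ≃ₜ ℝ) (S : ℝ → ℝ) (a : ℝ) : Prop where
  contDiff_one : ContDiff ℝ 1 φ
  deriv_pos : ∀ x, 0 < deriv φ x
  semiconj : Function.Semiconj φ S (a * ·)

namespace IsLinearization

variable {φ : ℝ ≃ₜ ℝ} {S : ℝ → ℝ} {a : ℝ} {n : WithTop ℕ∞}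

theorem hasDerivAt (hφ : IsLinearization φ S a) (x : ℝ) : HasDerivAt φ (deriv φ x) x :=
  (hφ.contDiff_one.differentiable one_ne_zero x).hasDerivAt

theorem hasDerivAt_symm (hφ : IsLinearization φ S a) (t : ℝ) :
    HasDerivAt φ.symm (deriv φ (φ.symm t))⁻¹ t :=
  (hφ.hasDerivAt _).of_local_left_inverse φ.symm.continuous.continuousAt (hφ.deriv_pos _).ne'
    (Eventually.of_forall φ.apply_symm_apply)

theorem contDiff_symm_iff (hφ : IsLinearization φ S a) :
    ContDiff ℝ n φ.symm ↔ ContDiff ℝ n φ :=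
  ⟨φ.symm.contDiff_symm_deriv (fun _ => inv_ne_zero (hφ.deriv_pos _).ne') hφ.hasDerivAt_symm,
    φ.contDiff_symm_deriv (fun _ => (hφ.deriv_pos _).ne') hφ.hasDerivAt⟩

theorem apply_symm (hφ : IsLinearization φ S a) (t : ℝ) : S (φ.symm t) = φ.symm (a * t) := by
  rw [φ.eq_symm_apply, hφ.semiconj.eq, φ.apply_symm_apply]

theorem deriv_comp_mul_deriv (hφ : IsLinearization φ S a) {x : ℝ} (hS : DifferentiableAt ℝ S x) :
    deriv φ (S x) * deriv S x = a * deriv φ x :=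
  ((hφ.hasDerivAt (S x)).comp x hS.hasDerivAt).unique
    (hφ.semiconj.comp_eq ▸ (hφ.hasDerivAt x).const_mul a)

theorem tendsto_iterate (hφ : IsLinearization φ S a) (ha : |a| < 1) (x : ℝ) :
    Tendsto (fun n => S^[n] x) atTop (𝓝 (φ.symm 0)) := by
  have h_iterate (n : ℕ) : S^[n] x = φ.symm (a ^ n * φ x) := by
    rw [φ.eq_symm_apply, (hφ.semiconj.iterate_right n).eq, mul_left_iterate]
  have h_pow : Tendsto (fun n : ℕ => a ^ n * φ x) atTop (𝓝 0) := by
    simpa using (tendsto_pow_atTop_nhds_zero_of_abs_lt_one ha).mul_const (φ x)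
  simpa only [h_iterate] using! (φ.symm.continuous.tendsto 0).comp h_pow

theorem exists_inverse (hφ : IsLinearization φ S a) (ha : a ≠ 0) (hn : n ≠ 0)
    (hS : ContDiff ℝ n S) : ∃ R, ContDiff ℝ n R ∧ IsLinearization φ R a⁻¹ := by
  let e : ℝ ≃ₜ ℝ := (φ.trans (Homeomorph.mulLeft₀ a ha)).trans φ.symm
  have he : ⇑e = S := funext fun x => by
    simp [e, ← hφ.semiconj.eq x]
  have hS' (x : ℝ) : deriv S x ≠ 0 := fun h0 => by
    have := hφ.deriv_comp_mul_deriv (hS.differentiable hn x)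
    rw [h0, mul_zero] at this
    exact mul_ne_zero ha (hφ.deriv_pos x).ne' this.symm
  refine ⟨e.symm, e.contDiff_symm_deriv hS' (fun x => ?_) (he ▸ hS), hφ.contDiff_one, hφ.deriv_pos,
    fun x => ?_⟩
  · rw [he]; exact (hS.differentiable hn x).hasDerivAt
  · simp [e]

theorem inv_mul_deriv_pos (hφ : IsLinearization φ S a) (ha : a ≠ 0) {x : ℝ}
    (hS : DifferentiableAt ℝ S x) : 0 < a⁻¹ * deriv S x := by
  have : a⁻¹ * deriv S x = deriv φ x / deriv φ (S x) := by
    rw [eq_div_iff (hφ.deriv_pos _).ne', mul_assoc, mul_comm (deriv S x),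
      hφ.deriv_comp_mul_deriv hS, inv_mul_cancel_left₀ ha]
  exact this ▸ div_pos (hφ.deriv_pos _) (hφ.deriv_pos _)

theorem log_deriv_eq (hφ : IsLinearization φ S a) (ha : a ≠ 0) {x : ℝ}
    (hS : DifferentiableAt ℝ S x) :
    Real.log (deriv φ x) = Real.log (deriv φ (S x)) + Real.log (a⁻¹ * deriv S x) := by
  rw [← Real.log_mul (hφ.deriv_pos _).ne' (hφ.inv_mul_deriv_pos ha hS).ne', mul_left_comm,
    hφ.deriv_comp_mul_deriv hS, inv_mul_cancel_left₀ ha]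

theorem contDiff_log_inv_mul_deriv (hφ : IsLinearization φ S a) (ha : a ≠ 0)
    (hS : ContDiff ℝ (n + 1) S) : ContDiff ℝ n fun x => Real.log (a⁻¹ * deriv S x) :=
  (contDiff_const.mul (contDiff_succ_iff_deriv.1 hS).2.2).log fun x =>
    (hφ.inv_mul_deriv_pos ha (hS.differentiable (by simp) x)).ne'

theorem continuous_log_deriv (hφ : IsLinearization φ S a) :
    Continuous fun x => Real.log (deriv φ x) :=
  (hφ.contDiff_one.continuous_deriv le_rfl).log fun x => (hφ.deriv_pos x).ne'

theorem contDiff_nat_succ (hφ : IsLinearization φ S a) (ha0 : a ≠ 0) (ha1 : |a| < 1) (k : ℕ)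
    (hS : ContDiff ℝ (k + 1) S) : ContDiff ℝ (k + 1) φ := by
  -- `log φ' ∘ φ⁻¹` is as smooth as `φ⁻¹`, and `(φ⁻¹)' = exp (-(log φ' ∘ φ⁻¹))` gains a derivative.
  rw [← hφ.contDiff_symm_iff]
  induction k with
  | zero => simpa using hφ.contDiff_symm_iff.2 hφ.contDiff_one
  | succ k ih =>
    have h_symm : ContDiff ℝ (k + 1 : ℕ) φ.symm := by
      simpa using ih (hS.of_le (by simp))
    have h_log : ContDiff ℝ (k + 1 : ℕ) fun t => Real.log (deriv φ (φ.symm t)) := by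
      refine contDiff_of_eq_smul_comp_mul_add (m := 1) ha1 (by simp)
        ((hφ.contDiff_log_inv_mul_deriv ha0 hS).comp h_symm)
        (hφ.continuous_log_deriv.comp φ.symm.continuous) fun t => ?_
      simpa [hφ.apply_symm] using
        hφ.log_deriv_eq ha0 (hS.differentiable (by simp) (φ.symm t))
    have h_deriv : deriv φ.symm = fun t => Real.exp (-Real.log (deriv φ (φ.symm t))) := by
      funext t
      rw [(hφ.hasDerivAt_symm t).deriv, Real.exp_neg, Real.exp_log (hφ.deriv_pos _)]
    refine contDiff_succ_iff_deriv.2 ⟨fun t => (hφ.hasDerivAt_symm t).differentiableAt, by simp, ?_⟩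
    exact h_deriv ▸ h_log.neg.exp

theorem analyticAt_symm_zero (hφ : IsLinearization φ S a) (ha0 : a ≠ 0) (ha1 : |a| < 1)
    (hS : AnalyticAt ℝ S (φ.symm 0)) : AnalyticAt ℝ φ (φ.symm 0) := by
  have h_fixed : S (φ.symm 0) = φ.symm 0 := by rw [hφ.apply_symm, mul_zero]
  have h_mult : deriv S (φ.symm 0) = a := by
    have h_eq := hφ.deriv_comp_mul_deriv hS.differentiableAt
    rw [h_fixed, mul_comm] at h_eq
    exact mul_right_cancel₀ (hφ.deriv_pos _).ne' h_eq
  subst h_mult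
  exact analyticAt_of_eventually_semiconj hS h_fixed ha0 ha1 (hφ.hasDerivAt _).differentiableAt
    (hφ.deriv_pos _).ne' (Eventually.of_forall hφ.semiconj)

theorem contDiff_omega (hφ : IsLinearization φ S a) (ha0 : a ≠ 0) (ha1 : |a| < 1)
    (hS : ContDiff ℝ ω S) : ContDiff ℝ ω φ := by
  have hS_an (x : ℝ) : AnalyticAt ℝ S x := hS.contDiffAt.analyticAt
  have h_pullback (x : ℝ) (hx : AnalyticAt ℝ φ (S x)) : AnalyticAt ℝ φ x :=
    (analyticAt_const.mul (hx.comp (hS_an x))).congr (Eventually.of_forall fun y => by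
      simp [hφ.semiconj.eq y, inv_mul_cancel_left₀ ha0] : (fun y => a⁻¹ * φ (S y)) =ᶠ[𝓝 x] φ)
  have h_near := (hφ.analyticAt_symm_zero ha0 ha1 (hS_an _)).eventually_analyticAt
  refine contDiff_omega_iff_analyticOnNhd.2 fun x _ => ?_
  obtain ⟨n, hn⟩ := ((hφ.tendsto_iterate ha1 x).eventually h_near).exists
  induction n generalizing x with
  | zero => exact hn
  | succ n ih => exact h_pullback x (ih (S x) (mem_univ _) hn)

theorem contDiff_of_abs_lt_one (hφ : IsLinearization φ S a) (ha0 : a ≠ 0) (ha1 : |a| < 1)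
    (hS : ContDiff ℝ n S) : ContDiff ℝ n φ := by
  induction n using WithTop.recTopCoe with
  | top => exact hφ.contDiff_omega ha0 ha1 hS
  | coe n =>
    refine contDiff_iff_forall_nat_le.2 fun k hk => ?_
    have hSk : ContDiff ℝ k S := hS.of_le (by exact_mod_cast hk)
    cases k with
    | zero => simpa using φ.continuous
    | succ k => exact_mod_cast hφ.contDiff_nat_succ ha0 ha1 k (by exact_mod_cast hSk)

theorem contDiff_of_one_lt_abs (hφ : IsLinearization φ S a) (ha : 1 < |a|)
    (hS : ContDiff ℝ n S) : ContDiff ℝ n φ := by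
  rcases eq_or_ne n 0 with rfl | hn
  · exact contDiff_zero.2 φ.continuous
  have ha0 : a ≠ 0 := abs_pos.1 (one_pos.trans ha)
  obtain ⟨R, hR, hφR⟩ := hφ.exists_inverse ha0 hn hS
  exact hφR.contDiff_of_abs_lt_one (inv_ne_zero ha0) (abs_inv a ▸ inv_lt_one_of_one_lt₀ ha) hR

end IsLinearization

section CircleLift

variable {T w u : ℝ → ℝ} {a b c : ℝ}

theorem exists_deriv_eq_mul_exp (hT' : ∀ x, deriv T x ≠ 0)
    (h : ∀ x, Real.log |deriv T x| = u (T x) - u x + c) :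
    ∃ a, |a| = Real.exp c ∧ ∀ x, deriv T x = a * Real.exp (u (T x) - u x) := by
  have h_abs (x : ℝ) : |deriv T x| = Real.exp c * Real.exp (u (T x) - u x) := by
    rw [← Real.exp_add, add_comm, ← h x, Real.exp_log (abs_pos.2 (hT' x))]
  have h_sign : (∀ x, deriv T x < 0) ∨ ∀ x, 0 < deriv T x := by
    simpa using hasDerivWithinAt_forall_lt_or_forall_gt_of_forall_ne convex_univ
      (fun x _ => (differentiableAt_of_deriv_ne_zero (hT' x)).hasDerivAt.hasDerivWithinAt)
      fun x _ => hT' x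
  rcases h_sign with h_neg | h_pos
  · refine ⟨-Real.exp c, by simp, fun x => ?_⟩
    rw [neg_mul, ← h_abs x, abs_of_neg (h_neg x), neg_neg]
  · exact ⟨Real.exp c, by simp, fun x => by rw [← h_abs x, abs_of_pos (h_pos x)]⟩

theorem exists_homeomorph_coe_eq {f : ℝ → ℝ} (hf : Continuous f) (hmono : StrictMono f)
    (hf1 : ∀ x, f (x + 1) = f x + 1) : ∃ φ : ℝ ≃ₜ ℝ, ⇑φ = f :=
  have h_surj : Function.Surjective f :=
    CircleDeg1Lift.continuous_iff_surjective ⟨⟨f, hmono.monotone⟩, hf1⟩ |>.1 hf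
  ⟨(hmono.orderIsoOfSurjective f h_surj).toHomeomorph, rfl⟩

theorem exists_homeomorph_hasDerivAt (hw : Continuous w) (hw0 : ∀ x, 0 < w x)
    (hw1 : Function.Periodic w 1) : ∃ (φ : ℝ ≃ₜ ℝ) (κ : ℝ), 0 < κ ∧
      (∀ x, HasDerivAt φ (κ * w x) x) ∧ ∀ x, φ (x + 1) = φ x + 1 := by
  have h_int : 0 < ∫ y in 0..1, w y :=
    intervalIntegral.intervalIntegral_pos_of_pos (hw.intervalIntegrable 0 1) hw0 one_pos
  let κ : ℝ := (∫ y in 0..1, w y)⁻¹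
  let f (x : ℝ) : ℝ := κ * ∫ y in 0..x, w y
  have hf (x : ℝ) : HasDerivAt f (κ * w x) x :=
    (hw.integral_hasStrictDerivAt 0 x).hasDerivAt.const_mul κ
  have hf1 (x : ℝ) : f (x + 1) = f x + 1 := by
    have h_period := hw1.intervalIntegral_add_eq x 0
    rw [zero_add] at h_period
    calc f (x + 1) = κ * ((∫ y in 0..x, w y) + ∫ y in x..x + 1, w y) := by
          rw [intervalIntegral.integral_add_adjacent_intervals (hw.intervalIntegrable _ _)
            (hw.intervalIntegrable _ _)]
      _ = f x + 1 := by rw [h_period, mul_add, inv_mul_cancel₀ h_int.ne']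
  have hκ : 0 < κ := inv_pos.2 h_int
  obtain ⟨φ, hφ⟩ := exists_homeomorph_coe_eq
    (continuous_iff_continuousAt.2 fun x => (hf x).continuousAt)
    (strictMono_of_hasDerivAt_pos hf fun x => mul_pos hκ (hw0 x)) hf1
  exact ⟨φ, κ, hκ, by rwa [hφ], by rwa [hφ]⟩

theorem exists_comp_eq_mul_add {φ : ℝ → ℝ} (hT : Differentiable ℝ T) (hφ : Differentiable ℝ φ)
    (h : ∀ x, deriv φ (T x) * deriv T x = a * deriv φ x) : ∃ b, ∀ x, φ (T x) = a * φ x + b := by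
  have h_diff (x : ℝ) : HasDerivAt (fun x => φ (T x) - a * φ x) 0 x := by
    refine (((hφ (T x)).hasDerivAt.comp x (hT x).hasDerivAt).sub
      ((hφ x).hasDerivAt.const_mul a)).congr_deriv ?_
    rw [h x, sub_self]
  refine ⟨φ (T 0) - a * φ 0, fun x => ?_⟩
  rw [← is_const_of_deriv_eq_zero (fun x => (h_diff x).differentiableAt)
    (fun x => (h_diff x).deriv) x 0, add_sub_cancel]

theorem eq_intCast_of_comp_eq_mul_add {D : ℤ} {φ : ℝ → ℝ} (hT : ∀ x, T (x + 1) = T x + D)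
    (hφ : ∀ x, φ (x + 1) = φ x + 1) (h : ∀ x, φ (T x) = a * φ x + b) : a = D := by
  have h_int : φ (T 0 + D) = φ (T 0) + D :=
    AddConstMapClass.map_add_int (⟨φ, hφ⟩ : AddConstMap ℝ ℝ 1 1) (T 0) D
  rw [← hT, h, h, hφ] at h_int
  linarith

theorem IsLinearization.of_comp_eq_mul_add {φ : ℝ ≃ₜ ℝ} (hφ : ContDiff ℝ 1 φ)
    (hφ' : ∀ x, 0 < deriv φ x) (ha : a ≠ 1) (h : ∀ x, φ (T x) = a * φ x + b) :
    IsLinearization (φ.trans (Homeomorph.addRight (b / (a - 1)))) T a where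
  contDiff_one := hφ.add contDiff_const
  deriv_pos x := (hφ' x).trans_eq (deriv_add_const (b / (a - 1))).symm
  semiconj x := by
    have : a - 1 ≠ 0 := sub_ne_zero.2 ha
    simp only [Homeomorph.trans_apply, Homeomorph.coe_addRight, h]
    field_simp
    ring

theorem exists_isLinearization {D : ℤ} (hD : D ≠ 1) (hT' : ∀ x, deriv T x ≠ 0)
    (hT1 : ∀ x, T (x + 1) = T x + D) (hu : Continuous u) (hu1 : Function.Periodic u 1)
    (h : ∀ x, Real.log |deriv T x| = u (T x) - u x + c) :
    |(D : ℝ)| = Real.exp c ∧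
      ∃ φ : ℝ ≃ₜ ℝ, IsLinearization φ T D ∧ ∀ x, φ (x + 1) = φ x + 1 := by
  obtain ⟨a, hac, ha⟩ := exists_deriv_eq_mul_exp hT' h
  obtain ⟨φ, κ, hκ, hφ, hφ1⟩ := exists_homeomorph_hasDerivAt (w := fun x => Real.exp (-u x))
    (by fun_prop) (fun x => Real.exp_pos _) (hu1.comp fun y => Real.exp (-y))
  have hφ' (x : ℝ) : deriv φ x = κ * Real.exp (-u x) := (hφ x).deriv
  have hφ_diff : Differentiable ℝ φ := fun x => (hφ x).differentiableAt
  have h_deriv (x : ℝ) : deriv φ (T x) * deriv T x = a * deriv φ x := by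
    have h_exp : Real.exp (-u (T x)) * Real.exp (u (T x) - u x) = Real.exp (-u x) := by
      rw [← Real.exp_add]
      ring_nf
    rw [hφ', hφ', ha, ← h_exp]
    ring
  obtain ⟨b, hb⟩ := exists_comp_eq_mul_add
    (fun x => differentiableAt_of_deriv_ne_zero (hT' x)) hφ_diff h_deriv
  obtain rfl : a = D := eq_intCast_of_comp_eq_mul_add hT1 hφ1 hb
  have hφ_C1 : ContDiff ℝ 1 φ := contDiff_one_iff_deriv.2 ⟨hφ_diff, by
    rw [funext hφ']
    fun_prop⟩
  refine ⟨hac, _, .of_comp_eq_mul_add hφ_C1 (fun x => ?_) (by exact_mod_cast hD) hb, fun x => ?_⟩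
  · rw [hφ']; exact mul_pos hκ (Real.exp_pos _)
  · simp [hφ1, add_right_comm]

end CircleLift

theorem stmt_17_general (r : WithTop ℕ∞)
    (D : ℤ) (hD : 2 ≤ |D|)
    (That : ℝ → ℝ) (hTC : ContDiff ℝ r That)
    (hTdeg : ∀ x, That (x + 1) = That x + D)
    (hT' : ∀ x, deriv That x ≠ 0)
    (u : ℝ → ℝ) (hu : Continuous u) (huper : Function.Periodic u 1)
    (c : ℝ) (hcoh : ∀ x, Real.log |deriv That x| = u (That x) - u x + c) :
    ∃ φ : ℝ → ℝ, ContDiff ℝ r φ ∧ StrictMono φ ∧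
      (∀ x, φ (x + 1) = φ x + 1) ∧ (∀ x, 0 < deriv φ x) ∧
      (∀ x, φ (That x) = (D : ℝ) * φ x) ∧ c = Real.log (D : ℝ) := by
  have hD1 : D ≠ 1 := by rintro rfl; norm_num at hD
  have hD_real : 1 < |(D : ℝ)| := by exact_mod_cast one_lt_two.trans_le hD
  obtain ⟨hDc, φ, hφ, hφ1⟩ := exists_isLinearization hD1 hT' hTdeg hu huper hcoh
  exact ⟨φ, hφ.contDiff_of_one_lt_abs hD_real hTC,
    strictMono_of_deriv_pos hφ.deriv_pos, hφ1, hφ.deriv_pos, hφ.semiconj,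
    by rw [← Real.log_abs, hDc, Real.log_exp]⟩

/-- Let `T` be a `C^r` expanding circle map, `r ∈ {1,2,…,∞,ω}`
(formalized by `r : WithTop ℕ∞`, including `r = ω` i.e. real analytic), of degree
`D = deg T` (so the lift satisfies `T̂(x+1) = T̂(x) + D`, `|D| ≥ 2`). If `log|T'|` is
`C⁰`-cohomologous to a constant `c` (i.e. `log|T̂'| = u∘T̂ − u + c` with `u` continuous
and 1-periodic), then `T` is `C^r`-conjugate to the linear map `x ↦ D·x mod 1`:
there is a `C^r` circle diffeomorphism `φ` (lifted by an increasing `C^r` map with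
nowhere-vanishing derivative and `φ(x+1) = φ(x)+1`) with `φ∘T̂ = D·φ`, and `c = log D`. -/
theorem stmt_17 (r : WithTop ℕ∞) (hr : 1 ≤ r)
    (D : ℤ) (hD : 2 ≤ |D|)
    (That : ℝ → ℝ) (hTC : ContDiff ℝ r That)
    (hTdeg : ∀ x, That (x + 1) = That x + D)
    (hTexp : ∀ x, 1 < |deriv That x|)
    (u : ℝ → ℝ) (hu : Continuous u) (huper : Function.Periodic u 1)
    (c : ℝ) (hcoh : ∀ x, Real.log |deriv That x| = u (That x) - u x + c) :
    ∃ φ : ℝ → ℝ, ContDiff ℝ r φ ∧ StrictMono φ ∧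
      (∀ x, φ (x + 1) = φ x + 1) ∧ (∀ x, 0 < deriv φ x) ∧
      (∀ x, φ (That x) = (D : ℝ) * φ x) ∧ c = Real.log (D : ℝ) :=
  stmt_17_general r D hD That hTC hTdeg (fun x => abs_pos.1 (one_pos.trans (hTexp x))) u hu
    huper c hcoh
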